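/- Weighted smoothing bilinear estimate (endpoint of Lemma 4.2, second part): Let n ≥ 3, m ≥ 2, m/2 ≤ λ ≤ m, and K > 0. Let A : ℝⁿ → ℝⁿ be continuous, let ψ : (0,∞) → ℝ be C¹ with |ψ(r)| ≤ K and |ψ'(r)| ≤ K/r for all r > 0, and let F ∈ C¹(ℝⁿ; ℝⁿ) satisfy ⟨x⟩^{m/2}|F(x)| + |DF(x)| ≤ K⟨x⟩^{λ} for all x, where |DF| is the Frobenius norm of the Jacobian matrix of F. Then there is a constant C depending only on n such that for all f, g ∈ C_c^∞(ℝⁿ; ℂ): | ∫_{ℝⁿ} ψ(|x|)·conj(f)·F·∇_A g dx | ≤ C·K²·( ‖∇_A f‖_{L²} + ‖⟨x⟩^{m/2} f‖_{L²} )·‖⟨x⟩^{λ−m/2} g‖_{L²}. -/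

import Mathlib

/-!
Since `A` is real, integration by parts moves the covariant derivative off `g`: the integral of
`conj f · X·∇_A g` becomes that of `conj (X·∇_A f) · g` and `div X · conj f · g`, up to sign, for
`X = ψ(|x|) F`. Cauchy–Schwarz bounds the terms in which the derivative falls on `f` or on `F`. The
remaining one contains the gradient of `ψ(|x|)`, which is at most `K / |x|`, and is absorbed by the
magnetic Hardy inequality `‖f / |x|‖ ≤ 2 / (n - 2) · ‖∇_A f‖`; the latter follows by the same
integration by parts with `g = f` and `X = x / |x|²`.

Both vector fields are singular at the origin. The second is regularized to `x / (|x|² + ε)`, and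
`ψ(|x|)` is multiplied by `|x|² / (|x|² + ε)`, which keeps its bounds up to constants and makes it
`C¹` across the origin. All estimates are uniform in `ε`, and dominated convergence removes it.
-/

open MeasureTheory Complex
open scoped BigOperators

noncomputable section

/-- The magnetic (covariant) partial derivative `(∂ₖ - i Aₖ) w`. -/
noncomputable def magD {n : ℕ} (A : EuclideanSpace ℝ (Fin n) → EuclideanSpace ℝ (Fin n))
    (k : Fin n) (w : EuclideanSpace ℝ (Fin n) → ℂ) (x : EuclideanSpace ℝ (Fin n)) : ℂ :=
  fderiv ℝ w x (EuclideanSpace.single k 1) - Complex.I * (A x k : ℂ) * w x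

/-- The partial derivative `∂ₖ f` of a real-valued function. -/
noncomputable def pdR {n : ℕ} (f : EuclideanSpace ℝ (Fin n) → ℝ) (k : Fin n)
    (x : EuclideanSpace ℝ (Fin n)) : ℝ :=
  fderiv ℝ f x (EuclideanSpace.single k 1)

/-- The Japanese bracket `⟨x⟩ = (1 + |x|²)^{1/2}`. -/
noncomputable def jbr {n : ℕ} (x : EuclideanSpace ℝ (Fin n)) : ℝ :=
  Real.sqrt (1 + ‖x‖ ^ 2)

/-- The Frobenius norm of the Jacobian matrix of a vector field. -/
noncomputable def frobJac {n : ℕ} (F : EuclideanSpace ℝ (Fin n) → EuclideanSpace ℝ (Fin n))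
    (x : EuclideanSpace ℝ (Fin n)) : ℝ :=
  Real.sqrt (∑ j, ∑ k, (pdR (fun y => F y j) k x) ^ 2)

section LpNorm

variable {α E F : Type*} [MeasurableSpace α] {μ : Measure α}
  [NormedAddCommGroup E] [NormedAddCommGroup F]

theorem lpNorm_two_eq_sqrt_integral {u : α → E} (hu : AEStronglyMeasurable u μ) :
    lpNorm u 2 μ = √(∫ x, ‖u x‖ ^ 2 ∂μ) := by
  rw [lpNorm_eq_integral_norm_rpow_toReal two_ne_zero ENNReal.ofNat_ne_top hu, Real.sqrt_eq_rpow]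
  simp

theorem integral_norm_mul_norm_le_lpNorm_mul_lpNorm {u : α → E} {v : α → F}
    (hu : MemLp u 2 μ) (hv : MemLp v 2 μ) :
    ∫ x, ‖u x‖ * ‖v x‖ ∂μ ≤ lpNorm u 2 μ * lpNorm v 2 μ := by
  have h := integral_mul_norm_le_Lp_mul_Lq (p := 2) (q := 2) Real.HolderConjugate.two_two
    (by simpa using hu.norm) (by simpa using hv.norm)
  rw [lpNorm_two_eq_sqrt_integral hu.1, lpNorm_two_eq_sqrt_integral hv.1]
  simpa only [norm_norm, Real.rpow_two, ← Real.sqrt_eq_rpow] using h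

theorem integral_mul_le_lpNorm_mul_lpNorm {u v : α → ℝ} (hu : MemLp u 2 μ) (hv : MemLp v 2 μ) :
    ∫ x, u x * v x ∂μ ≤ lpNorm u 2 μ * lpNorm v 2 μ := by
  refine le_trans (integral_mono (hu.integrable_mul hv) (hu.norm.integrable_mul hv.norm) fun x ↦ ?_)
    (integral_norm_mul_norm_le_lpNorm_mul_lpNorm hu hv)
  exact (le_abs_self _).trans (abs_mul _ _).le

theorem lpNorm_const_mul_mul_norm {c : ℝ} (hc : 0 ≤ c) (v : α → ℝ) (u : α → E) :
    lpNorm (fun x ↦ c * v x * ‖u x‖) 2 μ = c * lpNorm (fun x ↦ v x * ‖u x‖) 2 μ := by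
  have h := lpNorm_const_smul (p := 2) c (fun x ↦ v x * ‖u x‖) μ
  rw [coe_nnnorm, Real.norm_of_nonneg hc] at h
  simpa only [Pi.smul_def, smul_eq_mul, mul_assoc] using h

theorem memLp_mul_norm_of_hasCompactSupport [TopologicalSpace α] [OpensMeasurableSpace α]
    [IsFiniteMeasureOnCompacts μ] {p : ENNReal} {v : α → ℝ} {u : α → E} (hv : Continuous v)
    (hu : Continuous u) (hcu : HasCompactSupport u) : MemLp (fun x ↦ v x * ‖u x‖) p μ :=
  (hv.mul hu.norm).memLp_of_hasCompactSupport hcu.norm.mul_left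

end LpNorm

theorem integral_fderiv_apply_eq_zero {E F : Type*} [NormedAddCommGroup E] [NormedSpace ℝ E]
    [FiniteDimensional ℝ E] [MeasurableSpace E] [BorelSpace E] {μ : Measure E}
    [μ.IsAddHaarMeasure] [NormedAddCommGroup F] [NormedSpace ℝ F] {u : E → F}
    (hu : ContDiff ℝ 1 u) (hcu : HasCompactSupport u) (e : E) :
    ∫ x, fderiv ℝ u x e ∂μ = 0 := by
  have hdu : Integrable (fun x ↦ fderiv ℝ u x e) μ :=
    ((hu.continuous_fderiv one_ne_zero).clm_apply continuous_const).integrable_of_hasCompactSupport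
      (hcu.fderiv_apply ℝ e)
  simpa using integral_smul_fderiv_eq_neg_fderiv_smul_of_integrable (𝕜 := ℝ) (μ := μ) (v := e)
    (f := fun _ ↦ 1) (g := u) (by simp) (by simpa using hdu)
    (by simpa using hu.continuous.integrable_of_hasCompactSupport hcu)
    (by simp) (fun x _ ↦ hu.differentiable one_ne_zero x)

section MagneticGradient

variable {n : ℕ} {A X : EuclideanSpace ℝ (Fin n) → EuclideanSpace ℝ (Fin n)}
  {θ : EuclideanSpace ℝ (Fin n) → ℝ} {f g : EuclideanSpace ℝ (Fin n) → ℂ}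

/-- The magnetic gradient `∇_A f = ∇f - iAf`, as a map into `ℂⁿ` with its Euclidean norm. -/
def magGrad (A : EuclideanSpace ℝ (Fin n) → EuclideanSpace ℝ (Fin n))
    (f : EuclideanSpace ℝ (Fin n) → ℂ) (x : EuclideanSpace ℝ (Fin n)) : EuclideanSpace ℂ (Fin n) :=
  WithLp.toLp 2 fun k ↦ magD A k f x

/-- The magnetic derivative `X·∇_A f` along a real vector field `X`. -/
def magDirDeriv (A X : EuclideanSpace ℝ (Fin n) → EuclideanSpace ℝ (Fin n))
    (f : EuclideanSpace ℝ (Fin n) → ℂ) (x : EuclideanSpace ℝ (Fin n)) : ℂ :=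
  ∑ k, (X x k : ℂ) * magD A k f x

/-- The divergence `div X` of a vector field. -/
def fieldDiv (X : EuclideanSpace ℝ (Fin n) → EuclideanSpace ℝ (Fin n))
    (x : EuclideanSpace ℝ (Fin n)) : ℝ :=
  ∑ k, pdR (fun y ↦ X y k) k x

theorem norm_magGrad_sq (x : EuclideanSpace ℝ (Fin n)) :
    ‖magGrad A f x‖ ^ 2 = ∑ k, ‖magD A k f x‖ ^ 2 :=
  EuclideanSpace.norm_sq_eq _

theorem norm_magDirDeriv_le (x : EuclideanSpace ℝ (Fin n)) :
    ‖magDirDeriv A X f x‖ ≤ ‖X x‖ * ‖magGrad A f x‖ := by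
  calc ‖magDirDeriv A X f x‖ ≤ ∑ k, ‖X x k‖ * ‖magD A k f x‖ :=
        norm_sum_le_of_le _ fun k _ ↦ by rw [norm_mul, norm_real]
    _ ≤ √(∑ k, ‖X x k‖ ^ 2) * √(∑ k, ‖magD A k f x‖ ^ 2) :=
        Real.sum_mul_le_sqrt_mul_sqrt _ _ _
    _ = ‖X x‖ * ‖magGrad A f x‖ := by
        rw [← EuclideanSpace.norm_eq, ← norm_magGrad_sq, Real.sqrt_sq (norm_nonneg _)]

theorem magDirDeriv_smul (x : EuclideanSpace ℝ (Fin n)) :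
    magDirDeriv A (fun y ↦ θ y • X y) f x = θ x * magDirDeriv A X f x := by
  simp [magDirDeriv, Finset.mul_sum, mul_assoc]

theorem abs_fieldDiv_le_sqrt_mul_frobJac (x : EuclideanSpace ℝ (Fin n)) :
    |fieldDiv X x| ≤ √n * frobJac X x := by
  rw [frobJac, ← Real.sqrt_mul n.cast_nonneg]
  refine Real.abs_le_sqrt ?_
  calc fieldDiv X x ^ 2 ≤ n * ∑ k, pdR (fun y ↦ X y k) k x ^ 2 := by
        simpa [fieldDiv] using sq_sum_le_card_mul_sum_sq (s := Finset.univ)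
          (f := fun k ↦ pdR (fun y ↦ X y k) k x)
    _ ≤ n * ∑ j, ∑ k, pdR (fun y ↦ X y j) k x ^ 2 := by
        gcongr with j
        exact Finset.single_le_sum (f := fun k ↦ pdR (fun y ↦ X y j) k x ^ 2)
          (fun k _ ↦ sq_nonneg _) (Finset.mem_univ j)

theorem fieldDiv_smul {x : EuclideanSpace ℝ (Fin n)} (hθ : DifferentiableAt ℝ θ x)
    (hX : DifferentiableAt ℝ X x) :
    fieldDiv (fun y ↦ θ y • X y) x = θ x * fieldDiv X x + fderiv ℝ θ x (X x) := by
  have hcoord (k : Fin n) : pdR (fun y ↦ (θ y • X y) k) k x =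
      θ x * pdR (fun y ↦ X y k) k x + X x k * fderiv ℝ θ x (EuclideanSpace.single k 1) := by
    have h := fderiv_fun_mul hθ (differentiableAt_euclidean.1 hX k)
    simp only [pdR, PiLp.smul_apply, smul_eq_mul, h, add_apply, smul_apply]
  have hgrad : fderiv ℝ θ x (X x) = ∑ k, X x k * fderiv ℝ θ x (EuclideanSpace.single k 1) := by
    conv_lhs => rw [← (EuclideanSpace.basisFun (Fin n) ℝ).sum_repr (X x)]
    simp
  simp only [fieldDiv, hcoord, hgrad, Finset.sum_add_distrib, Finset.mul_sum]

theorem fieldDiv_id (x : EuclideanSpace ℝ (Fin n)) : fieldDiv (fun y ↦ y) x = n := by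
  have hcoord (k : Fin n) : pdR (fun y ↦ y k) k x = 1 := by
    have h := (EuclideanSpace.proj k : EuclideanSpace ℝ (Fin n) →L[ℝ] ℝ).hasFDerivAt (x := x)
    have h' : pdR (fun y ↦ y k) k x = _ := congrArg (· (EuclideanSpace.single k 1)) h.fderiv
    simpa using h'
  simp [fieldDiv, hcoord]

theorem continuous_magD (hA : Continuous A) (hf : ContDiff ℝ 1 f) (k : Fin n) :
    Continuous (magD A k f) := by
  have := (hf.continuous_fderiv one_ne_zero).clm_apply
    (continuous_const (y := EuclideanSpace.single k (1 : ℝ)))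
  have := hf.continuous
  unfold magD
  fun_prop

theorem continuous_magGrad (hA : Continuous A) (hf : ContDiff ℝ 1 f) :
    Continuous (magGrad A f) :=
  (PiLp.continuous_toLp 2 _).comp (continuous_pi (continuous_magD hA hf))

theorem continuous_magDirDeriv (hA : Continuous A) (hX : Continuous X) (hf : ContDiff ℝ 1 f) :
    Continuous (magDirDeriv A X f) := by
  have := continuous_magD hA hf
  unfold magDirDeriv
  fun_prop

theorem continuous_fieldDiv (hX : ContDiff ℝ 1 X) : Continuous (fieldDiv X) :=
  continuous_finsetSum _ fun k _ ↦
    ((contDiff_euclidean.1 hX k).continuous_fderiv one_ne_zero).clm_apply continuous_const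

theorem magD_eq_zero_of_notMem_tsupport {x : EuclideanSpace ℝ (Fin n)} (hx : x ∉ tsupport f)
    (k : Fin n) : magD A k f x = 0 := by
  have hdf : fderiv ℝ f x = 0 :=
    image_eq_zero_of_notMem_tsupport fun h ↦ hx (tsupport_fderiv_subset ℝ h)
  simp [magD, hdf, image_eq_zero_of_notMem_tsupport hx]

theorem hasCompactSupport_magGrad (hcf : HasCompactSupport f) :
    HasCompactSupport (magGrad A f) :=
  .intro hcf fun x hx ↦ by ext k; exact magD_eq_zero_of_notMem_tsupport hx k

theorem hasCompactSupport_magDirDeriv (hcf : HasCompactSupport f) :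
    HasCompactSupport (magDirDeriv A X f) :=
  .intro hcf fun x hx ↦ Finset.sum_eq_zero fun k _ ↦ by
    rw [magD_eq_zero_of_notMem_tsupport hx k, mul_zero]

theorem memLp_magGrad (hA : Continuous A) (hf : ContDiff ℝ 1 f) (hcf : HasCompactSupport f)
    {p : ENNReal} : MemLp (magGrad A f) p volume :=
  (continuous_magGrad hA hf).memLp_of_hasCompactSupport (hasCompactSupport_magGrad hcf)

/-! ### Integration by parts -/

/-- The potential terms of the two magnetic derivatives cancel because `A` is real. -/
theorem fderiv_conj_mul_ofReal_mul {x : EuclideanSpace ℝ (Fin n)} (hf : DifferentiableAt ℝ f x)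
    (hθ : DifferentiableAt ℝ θ x) (hg : DifferentiableAt ℝ g x) (k : Fin n) :
    fderiv ℝ (fun y ↦ starRingEnd ℂ (f y) * (θ y * g y)) x (EuclideanSpace.single k 1) =
      starRingEnd ℂ (f x) * (θ x * magD A k g x) + starRingEnd ℂ (θ x * magD A k f x) * g x
        + pdR θ k x * (starRingEnd ℂ (f x) * g x) := by
  have hf' : HasFDerivAt (fun y ↦ starRingEnd ℂ (f y)) _ x :=
    (conjCLE : ℂ →L[ℝ] ℂ).hasFDerivAt.comp x hf.hasFDerivAt
  have hθ' : HasFDerivAt (fun y ↦ (θ y : ℂ)) _ x := ofRealCLM.hasFDerivAt.comp x hθ.hasFDerivAt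
  rw [(hf'.fun_mul (hθ'.fun_mul hg.hasFDerivAt)).fderiv]
  simp only [smul_add, add_apply, smul_apply, smul_eq_mul, ContinuousLinearMap.comp_apply,
    ofRealCLM_apply, ContinuousLinearEquiv.coe_coe, ContinuousAlgEquiv.coeCLE_apply, conjCAE_apply,
    magD, map_mul, conj_ofReal, map_sub, conj_I, neg_mul, sub_neg_eq_add, pdR]
  ring

theorem integral_conj_mul_magDirDeriv (hA : Continuous A) (hX : ContDiff ℝ 1 X)
    (hf : ContDiff ℝ 1 f) (hg : ContDiff ℝ 1 g) (hcg : HasCompactSupport g) :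
    ∫ x, starRingEnd ℂ (f x) * magDirDeriv A X g x =
      -∫ x, (starRingEnd ℂ (magDirDeriv A X f x) * g x
        + fieldDiv X x * (starRingEnd ℂ (f x) * g x)) := by
  have hXk := contDiff_euclidean.1 hX
  have := hf.continuous
  have := hg.continuous
  have := continuous_magDirDeriv hA hX.continuous hf
  have := continuous_magDirDeriv hA hX.continuous hg
  have := continuous_fieldDiv hX
  let flux (k : Fin n) (y : EuclideanSpace ℝ (Fin n)) : ℂ :=
    starRingEnd ℂ (f y) * ((X y k : ℂ) * g y)
  have hflux (k : Fin n) : ContDiff ℝ 1 (flux k) :=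
    (conjCLE.contDiff.comp hf).mul ((ofRealCLM.contDiff.comp (hXk k)).mul hg)
  have hcflux (k : Fin n) : HasCompactSupport (flux k) := hcg.mul_left.mul_left
  have hdivergence (x : EuclideanSpace ℝ (Fin n)) :
      ∑ k, fderiv ℝ (flux k) x (EuclideanSpace.single k 1) =
        starRingEnd ℂ (f x) * magDirDeriv A X g x + (starRingEnd ℂ (magDirDeriv A X f x) * g x
          + fieldDiv X x * (starRingEnd ℂ (f x) * g x)) := by
    simp only [flux, fderiv_conj_mul_ofReal_mul (A := A) (hf.differentiable one_ne_zero x)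
      ((hXk _).differentiable one_ne_zero x) (hg.differentiable one_ne_zero x)]
    simp only [magDirDeriv, fieldDiv, Finset.sum_add_distrib, Finset.mul_sum, Finset.sum_mul,
      map_sum, ofReal_sum, add_assoc]
  rw [eq_neg_iff_add_eq_zero, ← integral_add]
  · simp only [← hdivergence]
    rw [integral_finsetSum _ fun k _ ↦ ?_]
    · exact Finset.sum_eq_zero fun k _ ↦
        integral_fderiv_apply_eq_zero (hflux k) (hcflux k) (EuclideanSpace.single k 1)
    · exact (((hflux k).continuous_fderiv one_ne_zero).clm_apply
        continuous_const).integrable_of_hasCompactSupport ((hcflux k).fderiv_apply ℝ _)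
  · exact Continuous.integrable_of_hasCompactSupport (by fun_prop)
      (hasCompactSupport_magDirDeriv hcg).mul_left
  · exact Continuous.integrable_of_hasCompactSupport (by fun_prop)
      (hcg.mul_left.add hcg.mul_left.mul_left)

theorem norm_integral_conj_mul_magDirDeriv_le (hA : Continuous A) (hX : ContDiff ℝ 1 X)
    (hf : ContDiff ℝ 1 f) (hg : ContDiff ℝ 1 g) (hcg : HasCompactSupport g) :
    ‖∫ x, starRingEnd ℂ (f x) * magDirDeriv A X g x‖ ≤
      ∫ x, (‖X x‖ * ‖magGrad A f x‖ + |fieldDiv X x| * ‖f x‖) * ‖g x‖ := by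
  have := continuous_magGrad hA hf
  have := continuous_fieldDiv hX
  have := hX.continuous
  have := hf.continuous
  have := hg.continuous
  rw [integral_conj_mul_magDirDeriv hA hX hf hg hcg, norm_neg]
  refine norm_integral_le_of_norm_le
    (Continuous.integrable_of_hasCompactSupport (by fun_prop) hcg.norm.mul_left)
    (.of_forall fun x ↦ (norm_add_le _ _).trans ?_)
  simp only [norm_mul, RCLike.norm_conj, norm_real, Real.norm_eq_abs]
  rw [add_mul, mul_assoc |_|]
  gcongr
  exact norm_magDirDeriv_le x

theorem integral_fieldDiv_mul_norm_sq_le (hA : Continuous A) (hX : ContDiff ℝ 1 X)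
    (hf : ContDiff ℝ 1 f) (hcf : HasCompactSupport f) :
    ∫ x, fieldDiv X x * ‖f x‖ ^ 2 ≤ 2 * ∫ x, ‖X x‖ * ‖f x‖ * ‖magGrad A f x‖ := by
  have := continuous_magGrad hA hf
  have := continuous_magDirDeriv hA hX.continuous hf
  have := continuous_fieldDiv hX
  have := hX.continuous
  have := hf.continuous
  have hpairing : ‖∫ x, starRingEnd ℂ (f x) * magDirDeriv A X f x‖ ≤
      ∫ x, ‖X x‖ * ‖f x‖ * ‖magGrad A f x‖ := by
    refine norm_integral_le_of_norm_le (Continuous.integrable_of_hasCompactSupport (by fun_prop)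
      hcf.norm.mul_left.mul_right) (.of_forall fun x ↦ ?_)
    rw [norm_mul, RCLike.norm_conj, mul_comm ‖X x‖, mul_assoc]
    gcongr
    exact norm_magDirDeriv_le x
  have hconj : ∫ x, starRingEnd ℂ (magDirDeriv A X f x) * f x =
      starRingEnd ℂ (∫ x, starRingEnd ℂ (f x) * magDirDeriv A X f x) := by
    rw [← integral_conj]
    simp [mul_comm]
  have hdiv : ∫ x, (fieldDiv X x : ℂ) * (starRingEnd ℂ (f x) * f x) =
      ((∫ x, fieldDiv X x * ‖f x‖ ^ 2 : ℝ) : ℂ) := by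
    rw [← integral_complex_ofReal]
    simp [conj_mul']
  have hint : Integrable fun x ↦ starRingEnd ℂ (magDirDeriv A X f x) * f x :=
    Continuous.integrable_of_hasCompactSupport (by fun_prop) hcf.mul_left
  have hint' : Integrable fun x ↦ (fieldDiv X x : ℂ) * (starRingEnd ℂ (f x) * f x) :=
    Continuous.integrable_of_hasCompactSupport (by fun_prop) hcf.mul_left.mul_left
  have hparts := integral_conj_mul_magDirDeriv hA hX hf hf hcf
  rw [integral_add hint hint', hconj, hdiv] at hparts
  have hre := congrArg re hparts
  simp only [neg_re, add_re, conj_re, ofReal_re] at hre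
  linarith [(abs_re_le_norm _).trans hpairing, neg_abs_le
    (∫ x, starRingEnd ℂ (f x) * magDirDeriv A X f x).re]

/-! ### The magnetic Hardy inequality -/

theorem div_sq_add_le_inv_sqrt {ε : ℝ} (hε : 0 < ε) (r : ℝ) :
    r / (r ^ 2 + ε) ≤ (√(r ^ 2 + ε))⁻¹ := by
  have : 0 < r ^ 2 + ε := by positivity
  rw [← Real.sqrt_div_self]
  gcongr
  exact Real.le_sqrt_of_sq_le (by linarith)

theorem norm_inv_norm_sq_add_smul_le {E : Type*} [SeminormedAddCommGroup E] [NormedSpace ℝ E]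
    {ε : ℝ} (hε : 0 < ε) (x : E) : ‖(‖x‖ ^ 2 + ε)⁻¹ • x‖ ≤ (√(‖x‖ ^ 2 + ε))⁻¹ := by
  rw [norm_smul_of_nonneg (by positivity), inv_mul_eq_div]
  exact div_sq_add_le_inv_sqrt hε _

theorem contDiff_inv_norm_sq_add {E : Type*} [NormedAddCommGroup E] [InnerProductSpace ℝ E]
    {ε : ℝ} (hε : 0 < ε) {m : WithTop ℕ∞} : ContDiff ℝ m fun x : E ↦ (‖x‖ ^ 2 + ε)⁻¹ :=
  ((contDiff_norm_sq ℝ).add contDiff_const).inv fun x ↦ by positivity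

theorem fderiv_inv_norm_sq_add_apply_self {E : Type*} [NormedAddCommGroup E]
    [InnerProductSpace ℝ E] {ε : ℝ} (hε : 0 < ε) (x : E) :
    fderiv ℝ (fun y : E ↦ (‖y‖ ^ 2 + ε)⁻¹) x x = -(2 * ‖x‖ ^ 2) / (‖x‖ ^ 2 + ε) ^ 2 := by
  have hpos : ‖x‖ ^ 2 + ε ≠ 0 := by positivity
  have h : HasFDerivAt (fun y : E ↦ (‖y‖ ^ 2 + ε)⁻¹) _ x :=
    (hasDerivAt_inv hpos).comp_hasFDerivAt x
      ((hasStrictFDerivAt_norm_sq x).hasFDerivAt.add_const ε)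
  rw [h.fderiv]
  simp [div_eq_inv_mul]

theorem sub_two_mul_inv_le_fieldDiv {ε : ℝ} (hε : 0 < ε) (x : EuclideanSpace ℝ (Fin n)) :
    ((n : ℝ) - 2) * (‖x‖ ^ 2 + ε)⁻¹ ≤ fieldDiv (fun y ↦ (‖y‖ ^ 2 + ε)⁻¹ • y) x := by
  have hpos : 0 < ‖x‖ ^ 2 + ε := by positivity
  rw [fieldDiv_smul ((contDiff_inv_norm_sq_add hε (m := 1)).differentiable one_ne_zero x)
    differentiableAt_fun_id, fieldDiv_id, fderiv_inv_norm_sq_add_apply_self hε]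
  have hle : 2 * ‖x‖ ^ 2 / (‖x‖ ^ 2 + ε) ^ 2 ≤ 2 * (‖x‖ ^ 2 + ε)⁻¹ := by
    rw [← div_eq_mul_inv, div_le_div_iff₀ (by positivity) hpos]
    nlinarith
  rw [neg_div]
  linarith

theorem continuous_inv_sqrt_norm_sq_add {E : Type*} [SeminormedAddCommGroup E] {ε : ℝ}
    (hε : 0 < ε) : Continuous fun x : E ↦ (√(‖x‖ ^ 2 + ε))⁻¹ :=
  Continuous.inv₀ (by fun_prop) fun x ↦ by positivity

theorem sub_two_mul_integral_inv_mul_norm_sq_le (hA : Continuous A) (hf : ContDiff ℝ 1 f)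
    (hcf : HasCompactSupport f) {ε : ℝ} (hε : 0 < ε) :
    ((n : ℝ) - 2) * ∫ x, (‖x‖ ^ 2 + ε)⁻¹ * ‖f x‖ ^ 2 ≤
      2 * ∫ x, (√(‖x‖ ^ 2 + ε))⁻¹ * ‖f x‖ * ‖magGrad A f x‖ := by
  have hcoef := contDiff_inv_norm_sq_add (E := EuclideanSpace ℝ (Fin n)) hε (m := 1)
  have hX : ContDiff ℝ 1 fun x : EuclideanSpace ℝ (Fin n) ↦ (‖x‖ ^ 2 + ε)⁻¹ • x :=
    hcoef.smul contDiff_id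
  have := hcoef.continuous
  have := hX.continuous
  have := hf.continuous
  have := continuous_magGrad hA hf
  have := continuous_fieldDiv hX
  have := continuous_inv_sqrt_norm_sq_add (E := EuclideanSpace ℝ (Fin n)) hε
  have hsq : HasCompactSupport fun x ↦ ‖f x‖ ^ 2 :=
    hcf.norm.comp_left (g := fun t : ℝ ↦ t ^ 2) (by simp)
  calc ((n : ℝ) - 2) * ∫ x, (‖x‖ ^ 2 + ε)⁻¹ * ‖f x‖ ^ 2
      = ∫ x, ((n : ℝ) - 2) * (‖x‖ ^ 2 + ε)⁻¹ * ‖f x‖ ^ 2 := by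
        simp only [mul_assoc, integral_const_mul]
    _ ≤ ∫ x, fieldDiv (fun y ↦ (‖y‖ ^ 2 + ε)⁻¹ • y) x * ‖f x‖ ^ 2 := by
        refine integral_mono
          (Continuous.integrable_of_hasCompactSupport (by fun_prop) hsq.mul_left)
          (Continuous.integrable_of_hasCompactSupport (by fun_prop) hsq.mul_left) fun x ↦ ?_
        exact mul_le_mul_of_nonneg_right (sub_two_mul_inv_le_fieldDiv hε x) (by positivity)
    _ ≤ 2 * ∫ x, ‖(‖x‖ ^ 2 + ε)⁻¹ • x‖ * ‖f x‖ * ‖magGrad A f x‖ :=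
        integral_fieldDiv_mul_norm_sq_le hA hX hf hcf
    _ ≤ 2 * ∫ x, (√(‖x‖ ^ 2 + ε))⁻¹ * ‖f x‖ * ‖magGrad A f x‖ := by
        refine mul_le_mul_of_nonneg_left (integral_mono
          (Continuous.integrable_of_hasCompactSupport (by fun_prop) hcf.norm.mul_left.mul_right)
          (Continuous.integrable_of_hasCompactSupport (by fun_prop) hcf.norm.mul_left.mul_right)
          fun x ↦ ?_) zero_le_two
        dsimp only
        gcongr
        exact norm_inv_norm_sq_add_smul_le hε x

theorem magnetic_hardy_inequality (hA : Continuous A) (hf : ContDiff ℝ 1 f)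
    (hcf : HasCompactSupport f) {ε : ℝ} (hε : 0 < ε) :
    ((n : ℝ) - 2) * lpNorm (fun x ↦ (√(‖x‖ ^ 2 + ε))⁻¹ * ‖f x‖) 2 volume ≤
      2 * lpNorm (magGrad A f) 2 volume := by
  have hu := memLp_mul_norm_of_hasCompactSupport (μ := volume) (p := 2)
    (continuous_inv_sqrt_norm_sq_add hε) hf.continuous hcf
  have hgrad := memLp_magGrad hA hf hcf (p := 2)
  have hsq : lpNorm (fun x ↦ (√(‖x‖ ^ 2 + ε))⁻¹ * ‖f x‖) 2 volume ^ 2 =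
      ∫ x, (‖x‖ ^ 2 + ε)⁻¹ * ‖f x‖ ^ 2 := by
    rw [lpNorm_two_eq_sqrt_integral hu.1, Real.sq_sqrt (integral_nonneg fun x ↦ by positivity)]
    refine integral_congr_ae (.of_forall fun x ↦ ?_)
    simp only [Real.norm_eq_abs, sq_abs, mul_pow, inv_pow]
    rw [Real.sq_sqrt (by positivity)]
  have hquad := sub_two_mul_integral_inv_mul_norm_sq_le hA hf hcf hε
  have hschwarz := integral_mul_le_lpNorm_mul_lpNorm hu hgrad.norm
  rw [lpNorm_norm hgrad.1] at hschwarz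
  rw [← hsq] at hquad
  rcases (lpNorm_nonneg (f := fun x ↦ (√(‖x‖ ^ 2 + ε))⁻¹ * ‖f x‖)
    (p := 2) (μ := volume)).eq_or_lt with hzero | hpos
  · simp [← hzero, lpNorm_nonneg]
  · exact le_of_mul_le_mul_left (by linarith) hpos

end MagneticGradient

/-! ### Radial multipliers -/

/-- A radial multiplier of size `K`: the profile of a function `ψ(|x|)` which is bounded by `K` and
has gradient at most `K / |x|`. Nothing is required of `ψ` on `(-∞, 0]`. -/
structure IsRadialMultiplier (ψ : ℝ → ℝ) (K : ℝ) : Prop where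
  contDiffOn : ContDiffOn ℝ 1 ψ (Set.Ioi 0)
  abs_le : ∀ r, 0 < r → |ψ r| ≤ K
  abs_deriv_le : ∀ r, 0 < r → |deriv ψ r| ≤ K / r

/-- The profile `ψ` damped at the origin by the factor `r² / (r² + ε)`. For `ε > 0` and `ψ` bounded
it vanishes to second order at `0`, whatever the value `ψ 0`. -/
def damp (ε : ℝ) (ψ : ℝ → ℝ) (r : ℝ) : ℝ :=
  r ^ 2 / (r ^ 2 + ε) * ψ r

theorem tendsto_damp (ψ : ℝ → ℝ) {r : ℝ} (hr : r ≠ 0) :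
    Filter.Tendsto (fun ε ↦ damp ε ψ r) (nhds 0) (nhds (ψ r)) := by
  have hcont : ContinuousAt (fun ε ↦ damp ε ψ r) 0 :=
    (ContinuousAt.div (by fun_prop) (by fun_prop) (by positivity)).mul (by fun_prop)
  simpa [ContinuousAt, damp, hr] using hcont

theorem norm_fderiv_comp_norm_le {E : Type*} [NormedAddCommGroup E] [InnerProductSpace ℝ E]
    {h : ℝ → ℝ} {x : E} (hx : x ≠ 0) (hh : DifferentiableAt ℝ h ‖x‖) :
    ‖fderiv ℝ (fun y : E ↦ h ‖y‖) x‖ ≤ |deriv h ‖x‖| := by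
  have hnorm := ((contDiffAt_norm (n := 1) ℝ hx).differentiableAt one_ne_zero).hasFDerivAt
  have hcomp : HasFDerivAt (fun y : E ↦ h ‖y‖) _ x :=
    hh.hasDerivAt.comp_hasFDerivAt x hnorm
  rw [hcomp.fderiv, norm_smul]
  exact mul_le_of_le_one_right (norm_nonneg _) (by
    simpa using norm_fderiv_le_of_lipschitz ℝ (x₀ := x) (lipschitzWith_one_norm (E := E)))

namespace IsRadialMultiplier

variable {ψ : ℝ → ℝ} {K ε r : ℝ}

theorem nonneg (hψ : IsRadialMultiplier ψ K) : 0 ≤ K :=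
  (abs_nonneg _).trans (hψ.abs_le 1 one_pos)

theorem abs_damp_le_mul (hψ : IsRadialMultiplier ψ K) (hε : 0 < ε) (hr : 0 ≤ r) :
    |damp ε ψ r| ≤ r ^ 2 / (r ^ 2 + ε) * K := by
  rcases hr.eq_or_lt with rfl | hr
  · simp [damp]
  · rw [damp, abs_mul, abs_of_nonneg (by positivity)]
    gcongr
    exact hψ.abs_le r hr

theorem abs_damp_le (hψ : IsRadialMultiplier ψ K) (hε : 0 < ε) (hr : 0 ≤ r) :
    |damp ε ψ r| ≤ K :=
  (hψ.abs_damp_le_mul hε hr).trans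
    (mul_le_of_le_one_left hψ.nonneg (div_le_one_of_le₀ (by linarith) (by positivity)))

theorem contDiffAt_damp (hψ : IsRadialMultiplier ψ K) (hε : 0 < ε) (hr : 0 < r) :
    ContDiffAt ℝ 1 (damp ε ψ) r :=
  (ContDiffAt.div (by fun_prop) (by fun_prop) (by positivity)).mul
    (hψ.contDiffOn.contDiffAt (Ioi_mem_nhds hr))

theorem hasDerivAt_damp (hψ : IsRadialMultiplier ψ K) (hε : 0 < ε) (hr : 0 < r) :
    HasDerivAt (damp ε ψ)
      (2 * r * ε / (r ^ 2 + ε) ^ 2 * ψ r + r ^ 2 / (r ^ 2 + ε) * deriv ψ r) r := by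
  have hsq : HasDerivAt (fun s : ℝ ↦ s ^ 2) (2 * r) r := by simpa using hasDerivAt_pow 2 r
  have hψr := (hψ.contDiffOn.contDiffAt (Ioi_mem_nhds hr)).differentiableAt one_ne_zero
  refine ((hsq.div (hsq.add_const ε) (by positivity)).mul hψr.hasDerivAt).congr_deriv ?_
  congr 2
  ring

theorem abs_deriv_damp_le (hψ : IsRadialMultiplier ψ K) (hε : 0 < ε) (hr : 0 < r) :
    |deriv (damp ε ψ) r| ≤ 3 * K * (r / (r ^ 2 + ε)) := by
  have hfactor : 2 * r * ε / (r ^ 2 + ε) ^ 2 ≤ 2 * (r / (r ^ 2 + ε)) := by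
    rw [← mul_div_assoc, div_le_div_iff₀ (by positivity) (by positivity)]
    have : 0 ≤ 2 * r * r ^ 2 * (r ^ 2 + ε) := by positivity
    linarith
  rw [(hψ.hasDerivAt_damp hε hr).deriv]
  calc |2 * r * ε / (r ^ 2 + ε) ^ 2 * ψ r + r ^ 2 / (r ^ 2 + ε) * deriv ψ r|
      ≤ 2 * r * ε / (r ^ 2 + ε) ^ 2 * |ψ r| + r ^ 2 / (r ^ 2 + ε) * |deriv ψ r| := by
        refine (abs_add_le _ _).trans_eq (congrArg₂ _ ?_ ?_) <;>
          rw [abs_mul, abs_of_pos (by positivity)]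
    _ ≤ 2 * (r / (r ^ 2 + ε)) * K + r ^ 2 / (r ^ 2 + ε) * (K / r) := by
        gcongr
        · exact hψ.abs_le r hr
        · exact hψ.abs_deriv_le r hr
    _ = 3 * K * (r / (r ^ 2 + ε)) := by
        field_simp
        ring

variable {E : Type*} [NormedAddCommGroup E] [InnerProductSpace ℝ E]

theorem contDiffAt_damp_norm (hψ : IsRadialMultiplier ψ K) (hε : 0 < ε) {x : E} (hx : x ≠ 0) :
    ContDiffAt ℝ 1 (fun y : E ↦ damp ε ψ ‖y‖) x :=
  (hψ.contDiffAt_damp hε (norm_pos_iff.2 hx)).comp x (contDiffAt_norm ℝ hx)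

theorem hasFDerivAt_damp_norm_zero (hψ : IsRadialMultiplier ψ K) (hε : 0 < ε) :
    HasFDerivAt (fun x : E ↦ damp ε ψ ‖x‖) (0 : E →L[ℝ] ℝ) 0 := by
  have hO : (fun x : E ↦ damp ε ψ ‖x‖) =O[nhds 0] fun x ↦ ‖x - 0‖ ^ 2 := by
    refine .of_bound (K / ε) (.of_forall fun x ↦ ?_)
    rw [sub_zero, Real.norm_of_nonneg (sq_nonneg ‖x‖), ← mul_div_right_comm, mul_comm,
      ← div_mul_eq_mul_div]
    refine (hψ.abs_damp_le_mul hε (norm_nonneg x)).trans ?_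
    have := hψ.nonneg
    gcongr
    exact le_add_of_nonneg_left (sq_nonneg _)
  exact hO.hasFDerivAt one_lt_two

theorem norm_fderiv_damp_norm_le (hψ : IsRadialMultiplier ψ K) (hε : 0 < ε) (x : E) :
    ‖fderiv ℝ (fun y : E ↦ damp ε ψ ‖y‖) x‖ ≤ 3 * K * (‖x‖ / (‖x‖ ^ 2 + ε)) := by
  rcases eq_or_ne x 0 with rfl | hx
  · simp [(hψ.hasFDerivAt_damp_norm_zero hε).fderiv]
  · have hr := norm_pos_iff.2 hx
    exact (norm_fderiv_comp_norm_le hx (hψ.hasDerivAt_damp hε hr).differentiableAt).trans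
      (hψ.abs_deriv_damp_le hε hr)

theorem contDiff_damp_norm (hψ : IsRadialMultiplier ψ K) (hε : 0 < ε) :
    ContDiff ℝ 1 fun x : E ↦ damp ε ψ ‖x‖ := by
  refine contDiff_one_iff_fderiv.2 ⟨fun x ↦ ?_, continuous_iff_continuousAt.2 fun x ↦ ?_⟩ <;>
    rcases eq_or_ne x 0 with rfl | hx
  · exact (hψ.hasFDerivAt_damp_norm_zero hε).differentiableAt
  · exact (hψ.contDiffAt_damp_norm hε hx).differentiableAt one_ne_zero
  · rw [ContinuousAt, (hψ.hasFDerivAt_damp_norm_zero hε).fderiv]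
    refine squeeze_zero_norm (hψ.norm_fderiv_damp_norm_le hε) ?_
    have hcont : Continuous fun x : E ↦ 3 * K * (‖x‖ / (‖x‖ ^ 2 + ε)) :=
      continuous_const.mul (Continuous.div (by fun_prop) (by fun_prop) fun x ↦ by positivity)
    simpa using hcont.tendsto 0
  · exact (hψ.contDiffAt_damp_norm hε hx).continuousAt_fderiv one_ne_zero

end IsRadialMultiplier

/-! ### The bilinear estimate -/

section BilinearEstimate

variable {n : ℕ} {A F X : EuclideanSpace ℝ (Fin n) → EuclideanSpace ℝ (Fin n)}
  {f g : EuclideanSpace ℝ (Fin n) → ℂ} {θ ρ σ v w : EuclideanSpace ℝ (Fin n) → ℝ} {ψ : ℝ → ℝ}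
  {K ε L : ℝ}

theorem norm_integral_conj_mul_magDirDeriv_le_lpNorm (hA : Continuous A) (hX : ContDiff ℝ 1 X)
    (hf : ContDiff ℝ 1 f) (hcf : HasCompactSupport f) (hg : ContDiff ℝ 1 g)
    (hcg : HasCompactSupport g) (hv : Continuous v) (hσ : Continuous σ) (hK : 0 ≤ K)
    (hXv : ∀ x, ‖X x‖ ≤ K * v x) (hdiv : ∀ x, |fieldDiv X x| ≤ σ x * v x) :
    ‖∫ x, starRingEnd ℂ (f x) * magDirDeriv A X g x‖ ≤
      (K * lpNorm (magGrad A f) 2 volume + lpNorm (fun x ↦ σ x * ‖f x‖) 2 volume)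
        * lpNorm (fun x ↦ v x * ‖g x‖) 2 volume := by
  have := continuous_magGrad hA hf
  have := continuous_fieldDiv hX
  have := hX.continuous
  have := hf.continuous
  have := hg.continuous
  have hgrad := memLp_magGrad hA hf hcf (p := 2)
  have hσf : MemLp _ 2 volume := memLp_mul_norm_of_hasCompactSupport hσ hf.continuous hcf
  have hvg : MemLp _ 2 volume := memLp_mul_norm_of_hasCompactSupport hv hg.continuous hcg
  have hint : Integrable fun x ↦ K * (‖magGrad A f x‖ * (v x * ‖g x‖)) :=
    (hgrad.norm.integrable_mul hvg).const_mul K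
  have hint' : Integrable fun x ↦ (σ x * ‖f x‖) * (v x * ‖g x‖) := hσf.integrable_mul hvg
  calc ‖∫ x, starRingEnd ℂ (f x) * magDirDeriv A X g x‖
      ≤ ∫ x, (‖X x‖ * ‖magGrad A f x‖ + |fieldDiv X x| * ‖f x‖) * ‖g x‖ :=
        norm_integral_conj_mul_magDirDeriv_le hA hX hf hg hcg
    _ ≤ ∫ x, (K * (‖magGrad A f x‖ * (v x * ‖g x‖)) + (σ x * ‖f x‖) * (v x * ‖g x‖)) := by
        refine integral_mono (Continuous.integrable_of_hasCompactSupport (by fun_prop)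
          hcg.norm.mul_left) (hint.add hint') fun x ↦ ?_
        calc _ ≤ (K * v x * ‖magGrad A f x‖ + σ x * v x * ‖f x‖) * ‖g x‖ := by
              gcongr
              exacts [hXv x, hdiv x]
          _ = _ := by ring
    _ = K * (∫ x, ‖magGrad A f x‖ * (v x * ‖g x‖)) + ∫ x, (σ x * ‖f x‖) * (v x * ‖g x‖) := by
        rw [integral_add hint hint', integral_const_mul]
    _ ≤ _ := by
        rw [add_mul, mul_assoc, ← lpNorm_norm hgrad.1]
        gcongr
        exacts [integral_mul_le_lpNorm_mul_lpNorm hgrad.norm hvg,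
          integral_mul_le_lpNorm_mul_lpNorm hσf hvg]

theorem abs_fieldDiv_smul_le (hθ : ContDiff ℝ 1 θ) (hF : ContDiff ℝ 1 F)
    {x : EuclideanSpace ℝ (Fin n)} (hθK : |θ x| ≤ K) (hθρ : ‖fderiv ℝ θ x‖ ≤ ρ x)
    (hFv : ‖F x‖ ≤ v x) (hdiv : |fieldDiv F x| ≤ w x * v x) :
    |fieldDiv (fun y ↦ θ y • F y) x| ≤ (K * w x + ρ x) * v x := by
  have hK := (abs_nonneg _).trans hθK
  have hρ := (norm_nonneg _).trans hθρ
  rw [fieldDiv_smul (hθ.differentiable one_ne_zero x) (hF.differentiable one_ne_zero x)]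
  calc |θ x * fieldDiv F x + fderiv ℝ θ x (F x)|
      ≤ |θ x| * |fieldDiv F x| + ‖fderiv ℝ θ x‖ * ‖F x‖ := by
        rw [← abs_mul]
        exact (abs_add_le _ _).trans (by gcongr; exact (fderiv ℝ θ x).le_opNorm _)
    _ ≤ K * (w x * v x) + ρ x * v x := by gcongr
    _ = (K * w x + ρ x) * v x := by ring

theorem lpNorm_inv_sqrt_mul_norm_le (hn : 3 ≤ n) (hA : Continuous A) (hf : ContDiff ℝ 1 f)
    (hcf : HasCompactSupport f) (hε : 0 < ε) :
    lpNorm (fun x ↦ (√(‖x‖ ^ 2 + ε))⁻¹ * ‖f x‖) 2 volume ≤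
      2 * lpNorm (magGrad A f) 2 volume := by
  refine le_trans (le_mul_of_one_le_left lpNorm_nonneg ?_) (magnetic_hardy_inequality hA hf hcf hε)
  have : (3 : ℝ) ≤ n := mod_cast hn
  linarith

/-- The constant is `7 = 1 + 3 · 2`, with `3` from the gradient of the damped multiplier and
`2 ≥ 2 / (n - 2)` from Hardy's inequality. -/
theorem norm_integral_conj_mul_magDirDeriv_damp_smul_le (hn : 3 ≤ n) (hA : Continuous A)
    (hψ : IsRadialMultiplier ψ K) (hF : ContDiff ℝ 1 F) (hf : ContDiff ℝ 1 f)
    (hcf : HasCompactSupport f) (hg : ContDiff ℝ 1 g) (hcg : HasCompactSupport g)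
    (hv : Continuous v) (hw : Continuous w) (hFv : ∀ x, ‖F x‖ ≤ v x)
    (hdiv : ∀ x, |fieldDiv F x| ≤ w x * v x) (hε : 0 < ε) :
    ‖∫ x, starRingEnd ℂ (f x) * magDirDeriv A (fun y ↦ damp ε ψ ‖y‖ • F y) g x‖ ≤
      K * (7 * lpNorm (magGrad A f) 2 volume + lpNorm (fun x ↦ w x * ‖f x‖) 2 volume)
        * lpNorm (fun x ↦ v x * ‖g x‖) 2 volume := by
  have hK := hψ.nonneg
  have hdamp := hψ.contDiff_damp_norm (E := EuclideanSpace ℝ (Fin n)) hε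
  have hinv := continuous_inv_sqrt_norm_sq_add (E := EuclideanSpace ℝ (Fin n)) hε
  have habs (x : EuclideanSpace ℝ (Fin n)) : |damp ε ψ ‖x‖| ≤ K :=
    hψ.abs_damp_le hε (norm_nonneg x)
  have hfderiv (x : EuclideanSpace ℝ (Fin n)) :
      ‖fderiv ℝ (fun y : EuclideanSpace ℝ (Fin n) ↦ damp ε ψ ‖y‖) x‖ ≤
        3 * K * (√(‖x‖ ^ 2 + ε))⁻¹ :=
    (hψ.norm_fderiv_damp_norm_le hε x).trans (by gcongr; exact div_sq_add_le_inv_sqrt hε _)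
  have hsplit : lpNorm (fun x ↦ (K * w x + 3 * K * (√(‖x‖ ^ 2 + ε))⁻¹) * ‖f x‖) 2 volume ≤
      K * lpNorm (fun x ↦ w x * ‖f x‖) 2 volume
        + 3 * K * lpNorm (fun x ↦ (√(‖x‖ ^ 2 + ε))⁻¹ * ‖f x‖) 2 volume := by
    rw [← lpNorm_const_mul_mul_norm hK, ← lpNorm_const_mul_mul_norm (by positivity)]
    simp only [add_mul]
    exact lpNorm_add_le (memLp_mul_norm_of_hasCompactSupport (hw.const_mul K) hf.continuous hcf)
      one_le_two
  refine (norm_integral_conj_mul_magDirDeriv_le_lpNorm (X := fun y ↦ damp ε ψ ‖y‖ • F y)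
    (σ := fun x ↦ K * w x + 3 * K * (√(‖x‖ ^ 2 + ε))⁻¹) hA (hdamp.smul hF) hf hcf hg hcg hv
    (by fun_prop) hK (fun x ↦ ?_) fun x ↦ abs_fieldDiv_smul_le
      (ρ := fun x ↦ 3 * K * (√(‖x‖ ^ 2 + ε))⁻¹) hdamp hF (habs x) (hfderiv x) (hFv x)
      (hdiv x)).trans ?_
  · rw [norm_smul]
    exact mul_le_mul (habs x) (hFv x) (norm_nonneg _) hK
  · gcongr
    · exact lpNorm_nonneg
    · linarith [mul_le_mul_of_nonneg_left (lpNorm_inv_sqrt_mul_norm_le hn hA hf hcf hε) hK]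

theorem tendsto_integral_conj_mul_magDirDeriv_damp_smul [NeZero n] (hA : Continuous A)
    (hψ : IsRadialMultiplier ψ K) (hF : Continuous F) (hf : Continuous f)
    (hcf : HasCompactSupport f) (hg : ContDiff ℝ 1 g) :
    Filter.Tendsto
      (fun ε ↦ ∫ x, starRingEnd ℂ (f x) * magDirDeriv A (fun y ↦ damp ε ψ ‖y‖ • F y) g x)
      (nhdsWithin 0 (Set.Ioi 0))
      (nhds (∫ x, starRingEnd ℂ (f x) * magDirDeriv A (fun y ↦ ψ ‖y‖ • F y) g x)) := by
  have hFg := continuous_magDirDeriv hA hF hg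
  simp only [magDirDeriv_smul]
  refine tendsto_integral_filter_of_dominated_convergence
    (fun x ↦ ‖f x‖ * (K * ‖magDirDeriv A F g x‖)) ?_ ?_ ?_ ?_
  · filter_upwards [self_mem_nhdsWithin] with ε hε
    have := (hψ.contDiff_damp_norm (E := EuclideanSpace ℝ (Fin n)) hε).continuous
    exact Continuous.aestronglyMeasurable (by fun_prop)
  · filter_upwards [self_mem_nhdsWithin] with ε hε
    refine .of_forall fun x ↦ ?_
    rw [norm_mul, norm_mul, RCLike.norm_conj, norm_real]
    gcongr
    exact hψ.abs_damp_le hε (norm_nonneg x)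
  · exact Continuous.integrable_of_hasCompactSupport (by fun_prop) hcf.norm.mul_right
  · filter_upwards [Measure.ae_ne volume (0 : EuclideanSpace ℝ (Fin n))] with x hx
    have hdamp := (tendsto_damp ψ (norm_ne_zero_iff.2 hx)).mono_left
      (nhdsWithin_le_nhds (s := Set.Ioi 0))
    exact (((continuous_ofReal.tendsto _).comp hdamp).mul_const _).const_mul _

theorem norm_integral_conj_mul_magDirDeriv_radial_smul_le (hn : 3 ≤ n) (hA : Continuous A)
    (hψ : IsRadialMultiplier ψ K) (hF : ContDiff ℝ 1 F) (hf : ContDiff ℝ 1 f)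
    (hcf : HasCompactSupport f) (hg : ContDiff ℝ 1 g) (hcg : HasCompactSupport g)
    (hv : Continuous v) (hw : Continuous w) (hFv : ∀ x, ‖F x‖ ≤ v x)
    (hdiv : ∀ x, |fieldDiv F x| ≤ w x * v x) :
    ‖∫ x, starRingEnd ℂ (f x) * magDirDeriv A (fun y ↦ ψ ‖y‖ • F y) g x‖ ≤
      K * (7 * lpNorm (magGrad A f) 2 volume + lpNorm (fun x ↦ w x * ‖f x‖) 2 volume)
        * lpNorm (fun x ↦ v x * ‖g x‖) 2 volume := by
  have : NeZero n := ⟨by lia⟩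
  refine le_of_tendsto (tendsto_integral_conj_mul_magDirDeriv_damp_smul hA hψ hF.continuous
    hf.continuous hcf hg).norm ?_
  filter_upwards [self_mem_nhdsWithin] with ε hε
  exact norm_integral_conj_mul_magDirDeriv_damp_smul_le hn hA hψ hF hf hcf hg hcg hv hw hFv hdiv hε

theorem weighted_smoothing_bilinear_estimate_general (hn : 3 ≤ n) (hA : Continuous A)
    (hψ : IsRadialMultiplier ψ K) (hF : ContDiff ℝ 1 F) (hf : ContDiff ℝ 1 f)
    (hcf : HasCompactSupport f) (hg : ContDiff ℝ 1 g) (hcg : HasCompactSupport g)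
    (hv : Continuous v) (hw : Continuous w) (hw₀ : ∀ x, 0 < w x)
    (hL : 0 ≤ L) (hFb : ∀ x, w x * ‖F x‖ + frobJac F x ≤ L * (w x * v x)) :
    ‖∫ x, ((ψ ‖x‖ : ℝ) : ℂ) * starRingEnd ℂ (f x) * ∑ k, (F x k : ℂ) * magD A k g x‖ ≤
      (7 + √n) * (K * L) *
        (√(∫ x, ∑ k, ‖magD A k f x‖ ^ 2) + √(∫ x, (w x * ‖f x‖) ^ 2)) *
        √(∫ x, (v x * ‖g x‖) ^ 2) := by
  have hbound (x : EuclideanSpace ℝ (Fin n)) : ‖F x‖ ≤ L * v x := by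
    have hJ : 0 ≤ frobJac F x := Real.sqrt_nonneg _
    exact le_of_mul_le_mul_left (by linarith [hFb x]) (hw₀ x)
  have hdiv (x : EuclideanSpace ℝ (Fin n)) : |fieldDiv F x| ≤ √n * w x * (L * v x) := by
    have hwF : 0 ≤ w x * ‖F x‖ := mul_nonneg (hw₀ x).le (norm_nonneg _)
    calc |fieldDiv F x| ≤ √n * frobJac F x := abs_fieldDiv_le_sqrt_mul_frobJac x
      _ ≤ √n * (L * (w x * v x)) := by gcongr; linarith [hFb x]
      _ = √n * w x * (L * v x) := by ring
  have hwf : MemLp _ 2 volume := memLp_mul_norm_of_hasCompactSupport hw hf.continuous hcf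
  have hvg : MemLp _ 2 volume := memLp_mul_norm_of_hasCompactSupport hv hg.continuous hcg
  have hmain := norm_integral_conj_mul_magDirDeriv_radial_smul_le hn hA hψ hF hf hcf hg hcg
    (hv.const_mul L) (hw.const_mul √n) hbound hdiv
  rw [lpNorm_const_mul_mul_norm hL, lpNorm_const_mul_mul_norm (Real.sqrt_nonneg _),
    lpNorm_two_eq_sqrt_integral (continuous_magGrad hA hf).aestronglyMeasurable,
    lpNorm_two_eq_sqrt_integral hwf.1, lpNorm_two_eq_sqrt_integral hvg.1] at hmain
  simp only [norm_magGrad_sq, magDirDeriv_smul, Real.norm_eq_abs, sq_abs] at hmain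
  have hn₀ := Real.sqrt_nonneg (n : ℝ)
  set N := √(∫ x, ∑ k, ‖magD A k f x‖ ^ 2)
  set M := √(∫ x, (w x * ‖f x‖) ^ 2)
  set V := √(∫ x, (v x * ‖g x‖) ^ 2)
  calc ‖∫ x, ((ψ ‖x‖ : ℝ) : ℂ) * starRingEnd ℂ (f x) * ∑ k, (F x k : ℂ) * magD A k g x‖
      = ‖∫ x, starRingEnd ℂ (f x) * (ψ ‖x‖ * magDirDeriv A F g x)‖ := by
        simp only [magDirDeriv, mul_left_comm, mul_assoc]
    _ ≤ K * (7 * N + √n * M) * (L * V) := hmain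
    _ ≤ K * ((7 + √n) * N + (7 + √n) * M) * (L * V) := by
        have := hψ.nonneg
        gcongr <;> linarith
    _ = (7 + √n) * (K * L) * (N + M) * V := by ring

end BilinearEstimate

theorem jbr_pos {n : ℕ} (x : EuclideanSpace ℝ (Fin n)) : 0 < jbr x :=
  Real.sqrt_pos.2 (by positivity)

theorem continuous_jbr_rpow {n : ℕ} (s : ℝ) :
    Continuous fun x : EuclideanSpace ℝ (Fin n) ↦ jbr x ^ s :=
  Continuous.rpow_const (by unfold jbr; fun_prop) fun x ↦ .inl (jbr_pos x).ne'

/-- Weighted smoothing bilinear estimate: if `|ψ| ≤ K`, `|ψ'| ≤ K/r` and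
`⟨x⟩^{m/2}|F| + |DF| ≤ K⟨x⟩^λ`, then there is `C = C(n)` with
`|∫ ψ(|x|) conj f · F·∇_A g| ≤ C K² (‖∇_A f‖ + ‖⟨x⟩^{m/2} f‖) ‖⟨x⟩^{λ-m/2} g‖`. -/
theorem weighted_smoothing_bilinear_estimate (n : ℕ) (hn : 3 ≤ n) :
    ∃ C : ℝ, 0 < C ∧
      ∀ (m lam K : ℝ), 2 ≤ m → m / 2 ≤ lam → lam ≤ m → 0 < K →
      ∀ (A : EuclideanSpace ℝ (Fin n) → EuclideanSpace ℝ (Fin n)), Continuous A →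
      ∀ (ψ : ℝ → ℝ), ContDiffOn ℝ 1 ψ (Set.Ioi 0) →
        (∀ r : ℝ, 0 < r → |ψ r| ≤ K) →
        (∀ r : ℝ, 0 < r → |deriv ψ r| ≤ K / r) →
      ∀ (F : EuclideanSpace ℝ (Fin n) → EuclideanSpace ℝ (Fin n)), ContDiff ℝ 1 F →
        (∀ x, jbr x ^ (m / 2) * ‖F x‖ + frobJac F x ≤ K * jbr x ^ lam) →
      ∀ (f g : EuclideanSpace ℝ (Fin n) → ℂ),
        ContDiff ℝ (⊤ : ℕ∞) f → HasCompactSupport f →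
        ContDiff ℝ (⊤ : ℕ∞) g → HasCompactSupport g →
        ‖∫ x : EuclideanSpace ℝ (Fin n),
            ((ψ ‖x‖ : ℝ) : ℂ) * (starRingEnd ℂ) (f x) * ∑ k, (F x k : ℂ) * magD A k g x‖
          ≤ C * K ^ 2 *
            (Real.sqrt (∫ x : EuclideanSpace ℝ (Fin n), ∑ k, ‖magD A k f x‖ ^ 2)
              + Real.sqrt (∫ x : EuclideanSpace ℝ (Fin n), (jbr x ^ (m / 2) * ‖f x‖) ^ 2)) *
            Real.sqrt (∫ x : EuclideanSpace ℝ (Fin n),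
              (jbr x ^ (lam - m / 2) * ‖g x‖) ^ 2) := by
  refine ⟨7 + √n, by positivity, ?_⟩
  intro m lam K _ _ _ hK A hA ψ hψC hψ hψ' F hF hFb f g hf hcf hg hcg
  rw [sq K]
  refine weighted_smoothing_bilinear_estimate_general hn hA ⟨hψC, hψ, hψ'⟩ hF
    (hf.of_le (mod_cast le_top)) hcf (hg.of_le (mod_cast le_top)) hcg (continuous_jbr_rpow _)
    (continuous_jbr_rpow _) (fun x ↦ Real.rpow_pos_of_pos (jbr_pos x) _) hK.le fun x ↦ ?_
  rw [← Real.rpow_add (jbr_pos x), add_sub_cancel]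
  exact hFb x
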